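/- Let R be a regular domain with a generalized regular system of parameters x = x_1,…,x_p, and let I ⊆ R be an ideal. Then Γ_x(I) = Γ_x(I̅) = Γ_x(I_0), where I̅ is the integral closure of I and I_0 is the ideal generated by the monomials x^a with a ∈ Γ_x(I) ∩ ℤ_{≥0}^p. -/

import Mathlib

open Ideal Set Pointwise

noncomputable section

namespace NND

variable {R : Type*} [CommRing R] {p : ℕ}

/-- The monomial `x^a = x 0 ^ a 0 * ⋯` in the elements `x`. -/
def mono (x : Fin p → R) (a : Fin p → ℕ) : R := ∏ i, x i ^ a i

/-- A (commutative) ring is regular local if it is Noetherian local and its maximal ideal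
can be generated by `dim R` elements. -/
def IsRegularLocal (A : Type*) [CommRing A] : Prop :=
  IsNoetherianRing A ∧ ∃ h : IsLocalRing A, ∃ s : Finset A,
    Ideal.span (s : Set A) = @IsLocalRing.maximalIdeal A _ h ∧
    (s.card : WithBot (WithTop ℕ)) = ringKrullDim A

/-- A regular domain: an integral domain whose localization at every prime is regular local. -/
def IsRegularDomain (A : Type*) [CommRing A] : Prop :=
  IsDomain A ∧ ∀ (P : Ideal A) (hP : P.IsPrime), IsRegularLocal (@Localization.AtPrime A _ P hP)

/-- `x` is a regular sequence. -/
def IsRegSeq (x : Fin p → R) : Prop :=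
  Ideal.span (Set.range x) ≠ ⊤ ∧
  ∀ i : Fin p, ∀ r : R, r * x i ∈ Ideal.span (x '' {j | j < i}) →
    r ∈ Ideal.span (x '' {j | j < i})

/-- A generalized regular system of parameters: a permutable regular sequence all of whose
subquotients are regular domains. -/
def IsGRSOP (x : Fin p → R) : Prop :=
  (∀ σ : Equiv.Perm (Fin p), IsRegSeq (x ∘ σ)) ∧
  ∀ S : Set (Fin p), IsRegularDomain (R ⧸ Ideal.span (x '' S))

/-- `A` is the exponent set of a monomial representation of `f`:
`h * f = ∑_{a ∈ A} r a * x^a` with `h` and the `r a` outside `(x_1, …, x_p)`. -/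
def IsMonRep (x : Fin p → R) (f : R) (A : Finset (Fin p → ℕ)) : Prop :=
  ∃ (h : R) (r : (Fin p → ℕ) → R),
    h ∉ Ideal.span (Set.range x) ∧ (∀ a ∈ A, r a ∉ Ideal.span (Set.range x)) ∧
    h * f = ∑ a ∈ A, r a * mono x a

/-- A minimal (irredundant) monomial representation: no monomial divides another. -/
def IsMinMonRep (x : Fin p → R) (f : R) (A : Finset (Fin p → ℕ)) : Prop :=
  IsMonRep x f A ∧ ∀ a ∈ A, ∀ b ∈ A, a ≠ b → ¬ mono x a ∣ mono x b

open Classical in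
/-- The support of `f`: the exponent set of its (unique) minimal monomial representation. -/
def supp (x : Fin p → R) (f : R) : Set (Fin p → ℕ) :=
  if h : ∃ A : Finset (Fin p → ℕ), IsMinMonRep x f A then ↑h.choose else ∅

/-- Embedding of exponent vectors into `ℝ^p`. -/
def toR (a : Fin p → ℕ) : Fin p → ℝ := fun i => (a i : ℝ)

/-- The Newton polyhedron of a set of ring elements. -/
def Γ (x : Fin p → R) (S : Set R) : Set (Fin p → ℝ) :=
  convexHull ℝ (toR '' ⋃ f ∈ S, supp x f)

/-- The Newton polyhedron `Γ_x(I)` of an ideal. -/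
def ΓI (x : Fin p → R) (I : Ideal R) : Set (Fin p → ℝ) := Γ x (I : Set R)

/-- The Newton polyhedron `Γ_x(f)` of an element: that of the principal ideal `(f)`. -/
def ΓE (x : Fin p → R) (f : R) : Set (Fin p → ℝ) := ΓI x (Ideal.span {f})

/-- The integral closure of an ideal `I`: elements satisfying an equation of integral
dependence `f^n + a_1 f^{n-1} + ⋯ + a_n = 0` with `a_i ∈ I^i`. -/
def intClosure (I : Ideal R) : Set R :=
  {f | ∃ n : ℕ, 0 < n ∧ ∃ a : ℕ → R, (∀ i ∈ Finset.Icc 1 n, a i ∈ I ^ i) ∧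
    f ^ n + ∑ i ∈ Finset.Icc 1 n, a i * f ^ (n - i) = 0}

/-- The monomial ideal `I_0` spanned by the lattice points of `Γ_x(I)`. -/
def idealZero (x : Fin p → R) (I : Ideal R) : Ideal R :=
  Ideal.span (mono x '' {a | toR a ∈ ΓI x I})

/-- The ideal `K_I` generated by the monomials lying in the integral closure of `I`. -/
def KIdeal (x : Fin p → R) (I : Ideal R) : Ideal R :=
  Ideal.span {m | (∃ a : Fin p → ℕ, m = mono x a) ∧ m ∈ intClosure I}

/-- The ideal generated by the monomials with exponents in `S`. -/
def MI (x : Fin p → R) (S : Set (Fin p → ℕ)) : Ideal R := Ideal.span (mono x '' S)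

/-- The ideal generated by the pure powers `x_j ^ n_j` with `n_j ≠ 0`. -/
def PI (x : Fin p → R) (n : Fin p → ℕ) : Ideal R :=
  Ideal.span {z | ∃ j, n j ≠ 0 ∧ z = x j ^ n j}

lemma mono_add (x : Fin p → R) (a b : Fin p → ℕ) : mono x (a + b) = mono x a * mono x b := by
  simp [mono, pow_add, Finset.prod_mul_distrib]

lemma mono_zero (x : Fin p → R) : mono x 0 = 1 := by simp [mono]

lemma mono_nsmul (x : Fin p → R) (k : ℕ) (a : Fin p → ℕ) : mono x (k • a) = mono x a ^ k := by
  simp [mono, ← Finset.prod_pow, ← pow_mul, mul_comm]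

lemma mono_single (x : Fin p → R) (i : Fin p) : mono x (Pi.single i 1) = x i := by
  rw [mono, Finset.prod_eq_single i] <;> simp +contextual

lemma mono_dvd {x : Fin p → R} {a b : Fin p → ℕ} (h : a ≤ b) : mono x a ∣ mono x b := by
  refine ⟨mono x (b - a), ?_⟩
  rw [← mono_add, add_tsub_cancel_of_le h]

lemma mono_mem_MI {x : Fin p → R} {S : Set (Fin p → ℕ)} {a : Fin p → ℕ} (h : a ∈ S) :
    mono x a ∈ MI x S := Ideal.subset_span ⟨a, h, rfl⟩

lemma MI_mono {x : Fin p → R} {S T : Set (Fin p → ℕ)} (h : S ⊆ T) : MI x S ≤ MI x T :=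
  Ideal.span_mono (Set.image_mono h)

lemma PI_eq (x : Fin p → R) (n : Fin p → ℕ) (j : Fin p) (hj : n j ≠ 0) :
    PI x n = PI x (Function.update n j 0) ⊔ Ideal.span {x j ^ n j} := by
  apply le_antisymm
  · refine Ideal.span_le.2 ?_
    rintro _ ⟨k, hk, rfl⟩
    by_cases h : k = j
    · subst h
      exact Ideal.mem_sup_right (Ideal.mem_span_singleton_self _)
    · exact Ideal.mem_sup_left (Ideal.subset_span ⟨k, by simp [h, hk], by simp [h]⟩)
  · refine sup_le (Ideal.span_le.2 ?_) (Ideal.span_le.2 ?_)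
    · rintro _ ⟨k, hk, rfl⟩
      by_cases h : k = j
      · subst h; simp at hk
      · simp only [ne_eq, h, not_false_eq_true, Function.update_of_ne] at hk ⊢
        exact Ideal.subset_span ⟨k, hk, rfl⟩
    · rintro _ rfl
      exact Ideal.subset_span ⟨j, hj, rfl⟩

lemma mem_PI_iff (x : Fin p → R) (n : Fin p → ℕ) (j : Fin p) (hj : n j ≠ 0) (z : R) :
    z ∈ PI x n ↔ ∃ s, z - s * x j ^ n j ∈ PI x (Function.update n j 0) := by
  rw [PI_eq x n j hj, Submodule.mem_sup]
  constructor
  · rintro ⟨y, hy, w, hw, rfl⟩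
    obtain ⟨s, rfl⟩ := Ideal.mem_span_singleton'.1 hw
    exact ⟨s, by simpa using hy⟩
  · rintro ⟨s, hs⟩
    exact ⟨_, hs, s * x j ^ n j, Ideal.mem_span_singleton'.2 ⟨s, rfl⟩, by ring⟩

lemma sum_update_lt (n : Fin p → ℕ) (j : Fin p) (k : ℕ) (h : k < n j) :
    ∑ i, Function.update n j k i < ∑ i, n i := by
  apply Finset.sum_lt_sum
  · intro i _
    by_cases hi : i = j
    · subst hi; simpa using h.le
    · simp [hi]
  · exact ⟨j, Finset.mem_univ _, by simpa using h⟩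

lemma PI_nzd (x : Fin p → R) (hprime : ∀ T : Set (Fin p), (Ideal.span (x '' T)).IsPrime)
    (hnot : ∀ (T : Set (Fin p)) (i), i ∉ T → x i ∉ Ideal.span (x '' T)) (N : ℕ) :
    ∀ n : Fin p → ℕ, ∑ i, n i = N → ∀ i, n i = 0 → ∀ f, f * x i ∈ PI x n → f ∈ PI x n := by
  induction N using Nat.strong_induction_on with
  | _ N ih =>
  intro n hn i hi f hf
  subst hn
  by_cases h : ∀ j, n j ≤ 1
  · have hE : PI x n = Ideal.span (x '' {j | n j ≠ 0}) := by
      unfold PI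
      congr 1
      ext z
      simp only [Set.mem_ofPred_eq, Set.mem_image]
      constructor
      · rintro ⟨j, hj, rfl⟩
        exact ⟨j, hj, by rw [show n j = 1 by have := h j; omega, pow_one]⟩
      · rintro ⟨j, hj, rfl⟩
        exact ⟨j, hj, by rw [show n j = 1 by have := h j; omega, pow_one]⟩
    rw [hE] at hf ⊢
    exact ((hprime _).mem_or_mem hf).resolve_right (hnot _ _ (by simpa using hi))
  · push Not at h
    obtain ⟨j, hj⟩ := h
    have hij : i ≠ j := by rintro rfl; omega
    obtain ⟨s, hs⟩ := (mem_PI_iff x n j (by omega) _).1 hf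
    set K := PI x (Function.update n j 0) with hK
    have hKn : ∀ g k, g * x j ^ k ∈ K → g ∈ K := by
      intro g k
      induction k generalizing g with
      | zero => simp
      | succ k ihk =>
        intro hg
        apply ihk
        refine ih _ (sum_update_lt n j 0 (by omega)) _ rfl j (by simp) _ ?_
        rw [mul_assoc, ← pow_succ]; exact hg
    have hpow : n j = (n j - 1) + 1 := by omega
    -- step one
    have h1 : f ∈ PI x (Function.update n j (n j - 1)) := by
      refine ih _ (sum_update_lt n j _ (by omega)) _ rfl i (by simp [hij, hi]) _ ?_
      rw [mem_PI_iff x _ j (by simp; omega)]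
      refine ⟨s * x j, ?_⟩
      simp only [Function.update_idem, Function.update_self]
      rwa [mul_assoc, ← pow_succ', ← hpow]
    rw [mem_PI_iff x _ j (by simp; omega)] at h1
    obtain ⟨t, ht⟩ := h1
    simp only [Function.update_idem, Function.update_self] at ht
    have h2 : (t * x i - s * x j) * x j ^ (n j - 1) ∈ K := by
      have e : (t * x i - s * x j) * x j ^ (n j - 1) = (f * x i - s * x j ^ n j)
          - x i * (f - t * x j ^ (n j - 1)) := by
        conv_rhs => rw [hpow, pow_succ]
        simp only [Nat.add_sub_cancel]
        ring
      rw [e]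
      exact sub_mem hs (Ideal.mul_mem_left _ _ ht)
    have h3 := hKn _ _ h2
    have h4 : t ∈ PI x (Function.update n j 1) := by
      refine ih _ (sum_update_lt n j _ (by omega)) _ rfl i (by simp [hij, hi]) _ ?_
      rw [mem_PI_iff x _ j (by simp)]
      refine ⟨s, ?_⟩
      simpa using h3
    rw [mem_PI_iff x _ j (by simp)] at h4
    obtain ⟨q, hq⟩ := h4
    simp only [Function.update_idem, Function.update_self, pow_one] at hq
    rw [mem_PI_iff x _ j (by omega)]
    refine ⟨q, ?_⟩
    have e : f - q * x j ^ n j = (f - t * x j ^ (n j - 1)) + x j ^ (n j - 1) * (t - q * x j) := by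
      conv_lhs => rw [hpow, pow_succ]
      ring
    rw [e]
    exact add_mem ht (Ideal.mul_mem_left _ _ hq)

lemma PI_colon (x : Fin p → R) (hprime : ∀ T : Set (Fin p), (Ideal.span (x '' T)).IsPrime)
    (hnot : ∀ (T : Set (Fin p)) (i), i ∉ T → x i ∉ Ideal.span (x '' T)) (N : ℕ) :
    ∀ d : Fin p → ℕ, ∑ i, d i = N → ∀ r, r * mono x d ∈ PI x (d + 1) →
      r ∈ Ideal.span (Set.range x) := by
  induction N using Nat.strong_induction_on with
  | _ N ih =>
  intro d hd r hr
  subst hd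
  by_cases h : d = 0
  · subst h
    rw [mono_zero, mul_one] at hr
    refine (Ideal.span_le.2 ?_ : PI x (0 + 1) ≤ _) hr
    rintro _ ⟨j, -, rfl⟩
    simpa using Ideal.subset_span (Set.mem_range_self j)
  · obtain ⟨i, hi⟩ := Function.ne_iff.1 h
    simp only [Pi.zero_apply] at hi
    set d' := Function.update d i (d i - 1) with hd'
    have hdd : d = d' + Pi.single i 1 := by
      ext k
      by_cases hk : k = i
      · subst hk; simp [d']; omega
      · simp [d', hk]
    obtain ⟨s, hs⟩ := (mem_PI_iff x (d + 1) i (by simp) _).1 hr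
    have hu : Function.update (d + 1) i 0 = Function.update (d' + 1) i 0 := by
      ext k
      by_cases hk : k = i
      · subst hk; simp
      · simp [d', hk]
    refine ih _ (sum_update_lt d i (d i - 1) (by omega)) d' rfl r ?_
    rw [mem_PI_iff x _ i (by simp)]
    refine ⟨s, ?_⟩
    rw [← hu]
    refine PI_nzd x hprime hnot _ _ rfl i (by simp) _ ?_
    convert hs using 1
    have : (d + 1) i = (d' + 1) i + 1 := by simp [d']; omega
    rw [this, pow_succ]
    conv_rhs => rw [hdd, mono_add, mono_single]
    ring

/-- Monomial lemma. -/
lemma ML (x : Fin p → R) (hprime : ∀ T : Set (Fin p), (Ideal.span (x '' T)).IsPrime)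
    (hnot : ∀ (T : Set (Fin p)) (i), i ∉ T → x i ∉ Ideal.span (x '' T))
    (S : Set (Fin p → ℕ)) (d : Fin p → ℕ) (r : R) (hr : r ∉ Ideal.span (Set.range x))
    (h : r * mono x d ∈ MI x S) : ∃ a ∈ S, a ≤ d := by
  by_contra hcon
  push Not at hcon
  apply hr
  refine PI_colon x hprime hnot _ d rfl r ?_
  refine (Ideal.span_le.2 ?_ : MI x S ≤ _) h
  rintro _ ⟨a, ha, rfl⟩
  have := hcon a ha
  rw [Pi.le_def] at this
  push Not at this
  obtain ⟨j, hj⟩ := this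
  have hdvd : x j ^ (d + 1) j ∣ mono x a :=
    (pow_dvd_pow _ (by simpa using hj)).trans (Finset.dvd_prod_of_mem (fun i => x i ^ a i)
      (Finset.mem_univ j))
  exact Ideal.mem_of_dvd _ hdvd (Ideal.subset_span ⟨j, by simp, rfl⟩)

lemma GRSOP_prime {x : Fin p → R} (hx : IsGRSOP x) (T : Set (Fin p)) :
    (Ideal.span (x '' T)).IsPrime :=
  (Ideal.Quotient.isDomain_iff_prime _).1 (hx.2 T).1

lemma GRSOP_not {x : Fin p → R} (hx : IsGRSOP x) (T : Set (Fin p)) (i : Fin p) (hi : i ∉ T) :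
    x i ∉ Ideal.span (x '' T) := by
  intro h
  obtain ⟨q, rfl⟩ : ∃ q, p = q + 1 := ⟨p - 1, by have := i.2; omega⟩
  have h1 := (hx.1 (Equiv.swap i (Fin.last q))).2 (Fin.last q) 1
  have hsub : x '' T ⊆ (x ∘ Equiv.swap i (Fin.last q)) '' {j | j < Fin.last q} := by
    rintro _ ⟨t, ht, rfl⟩
    have hti : t ≠ i := by rintro rfl; exact hi ht
    refine ⟨Equiv.swap i (Fin.last q) t, ?_, by simp⟩
    rw [Set.mem_ofPred_eq, Fin.lt_last_iff_ne_last]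
    intro he
    rw [Equiv.swap_apply_eq_iff, Equiv.swap_apply_right] at he
    exact hti he
  have h2 := h1 (by simpa using Ideal.span_mono hsub h)
  have h3 : (1 : R) ∈ Ideal.span (Set.range x) := by
    refine Ideal.span_mono ?_ h2
    rintro _ ⟨j, _, rfl⟩
    exact ⟨_, rfl⟩
  have := (GRSOP_prime hx Set.univ).ne_top
  rw [Set.image_univ] at this
  exact this ((Ideal.eq_top_iff_one _).2 h3)

/-- Unit monomial representation. -/
def URep {A : Type*} [CommRing A] (y : Fin p → A) (f : A) (B : Finset (Fin p → ℕ)) : Prop :=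
  ∃ u : (Fin p → ℕ) → A, (∀ b ∈ B, IsUnit (u b)) ∧ f = ∑ b ∈ B, u b * mono y b

/-- The monomial membership property. -/
def HML {A : Type*} [CommRing A] (y : Fin p → A) : Prop :=
  ∀ (S : Set (Fin p → ℕ)) (d : Fin p → ℕ), mono y d ∈ MI y S → ∃ a ∈ S, a ≤ d

/-- Antichain. -/
def AC (B : Finset (Fin p → ℕ)) : Prop := ∀ a ∈ B, ∀ b ∈ B, a ≤ b → a = b

lemma strongML {A : Type*} [CommRing A] {y : Fin p → A} (hy : HML y) {f : A}
    {B : Finset (Fin p → ℕ)} (hf : URep y f B) (hB : AC B) {S : Set (Fin p → ℕ)}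
    (hfS : f ∈ MI y S) : ∀ b ∈ B, ∃ a ∈ S, a ≤ b := by
  classical
  intro b hb
  by_contra hcon
  obtain ⟨u, hu, rfl⟩ := hf
  have h1 : u b * mono y b ∈ MI y (S ∪ {a | a ∈ B.erase b}) := by
    rw [← Finset.add_sum_erase _ _ hb] at hfS
    have h2 := MI_mono (x := y) (Set.subset_union_left (t := {a | a ∈ B.erase b})) hfS
    refine (Ideal.add_mem_iff_left _ ?_).1 h2
    refine sum_mem fun a ha => Ideal.mul_mem_left _ _ (mono_mem_MI (Or.inr ha))
  rw [Ideal.unit_mul_mem_iff_mem _ (hu b hb)] at h1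
  obtain ⟨a, ha | ha, hab⟩ := hy _ _ h1
  · exact hcon ⟨a, ha, hab⟩
  · have ha' : a ∈ B.erase b := ha
    rw [Finset.mem_erase] at ha'
    exact ha'.1 (hB a ha'.2 b hb hab)

lemma URep_mem_MI {A : Type*} [CommRing A] {y : Fin p → A} {f : A}
    {B : Finset (Fin p → ℕ)} (hf : URep y f B) {S : Set (Fin p → ℕ)} (h : ∀ b ∈ B, b ∈ S) :
    f ∈ MI y S := by
  obtain ⟨u, hu, rfl⟩ := hf
  exact sum_mem fun a ha => Ideal.mul_mem_left _ _ (mono_mem_MI (h a ha))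

lemma URep_unique {A : Type*} [CommRing A] {y : Fin p → A} (hy : HML y) {f : A}
    {B C : Finset (Fin p → ℕ)} (hf : URep y f B) (hB : AC B) (hf' : URep y f C) (hC : AC C) :
    B = C := by
  have key : ∀ B C : Finset (Fin p → ℕ), URep y f B → AC B → URep y f C → AC C → B ⊆ C := by
    intro B C hf hB hf' hC b hb
    obtain ⟨c, hc, hcb⟩ := strongML hy hf hB (URep_mem_MI (S := {c | c ∈ C}) hf' fun b hb => hb) b hb
    obtain ⟨d, hd, hdc⟩ := strongML hy hf' hC (URep_mem_MI (S := {c | c ∈ B}) hf fun b hb => hb) c hc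
    have := hB d hd b hb (hdc.trans hcb)
    subst this
    have := le_antisymm hcb hdc
    subst this
    exact hc
  exact (key B C hf hB hf' hC).antisymm (key C B hf' hC hf hB)

section core
variable {A : Type*} [CommRing A] {L : Type*} [AddCommMonoid L] [LinearOrder L]
  [IsOrderedCancelAddMonoid L]

lemma MI_mul_mem {y : Fin p → A} {S T U : Set (Fin p → ℕ)} (h : ∀ a ∈ S, ∀ b ∈ T, a + b ∈ U)
    {f g : A} (hf : f ∈ MI y S) (hg : g ∈ MI y T) : f * g ∈ MI y U := by
  have := Ideal.mul_mem_mul hf hg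
  unfold MI at this
  rw [Ideal.span_mul_span'] at this
  refine (Ideal.span_le.2 ?_) this
  rintro _ ⟨_, ⟨a, ha, rfl⟩, _, ⟨b, hb, rfl⟩, rfl⟩
  simp only [← mono_add]
  exact mono_mem_MI (h a ha b hb)

lemma core0 {y : Fin p → A} (hy : HML y) (key : (Fin p → ℕ) →+ L) (hkey : Monotone key)
    (b : Fin p → ℕ) (u f : A) (hu : IsUnit u) (J : Ideal A)
    (hJ : J ≤ MI y {a | key b < key a}) (hf : f - u * mono y b ∈ MI y {a | key b < key a})
    (n : ℕ) (_hn : 0 < n) (c : ℕ → A) (hc : ∀ i ∈ Finset.Icc 1 n, c i ∈ J ^ i)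
    (he : f ^ n + ∑ i ∈ Finset.Icc 1 n, c i * f ^ (n - i) = 0) : False := by
  have hGf : f ∈ MI y {a | key b ≤ key a} := by
    have h1 : u * mono y b ∈ MI y {a | key b ≤ key a} :=
      Ideal.mul_mem_left _ _ (mono_mem_MI (le_refl (key b)))
    have h2 : f - u * mono y b ∈ MI y {a | key b ≤ key a} :=
      MI_mono (x := y) (fun a (ha : key b < key a) => (ha.le : key b ≤ key a)) hf
    simpa using add_mem h2 h1
  have hGpow : ∀ k : ℕ, f ^ k ∈ MI y {a | k • key b ≤ key a} := by
    intro k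
    induction k with
    | zero => 
      rw [pow_zero, ← mono_zero y]
      exact mono_mem_MI (by simp)
    | succ k ih =>
      rw [pow_succ]
      refine MI_mul_mem ?_ ih hGf
      intro a ha a' ha'
      simp only [Set.mem_ofPred_eq] at ha ha' ⊢
      rw [succ_nsmul, map_add]
      exact add_le_add ha ha'
  have hdiff : ∀ k : ℕ, f ^ k - u ^ k * mono y (k • b) ∈ MI y {a | k • key b < key a} := by
    intro k
    induction k with
    | zero => simp [mono_zero]
    | succ k ih =>
      have e : f ^ (k + 1) - u ^ (k + 1) * mono y ((k + 1) • b) =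
        (f ^ k - u ^ k * mono y (k • b)) * f + 
          u ^ k * (mono y (k • b) * (f - u * mono y b)) := by
        rw [succ_nsmul, mono_add]; ring
      rw [e]
      refine add_mem (MI_mul_mem ?_ ih hGf) (Ideal.mul_mem_left _ _ (MI_mul_mem (S := {k • b}) 
        ?_ (mono_mem_MI rfl) hf))
      · intro a ha a' ha'
        simp only [Set.mem_ofPred_eq] at ha ha' ⊢
        rw [succ_nsmul, map_add]
        exact add_lt_add_of_lt_of_le ha ha'
      · rintro a rfl a' ha'
        simp only [Set.mem_ofPred_eq] at ha' ⊢
        rw [succ_nsmul, map_add, map_nsmul]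
        exact add_lt_add_of_le_of_lt le_rfl ha'
  have hJpow : ∀ k : ℕ, J ^ (k + 1) ≤ MI y {a | (k + 1) • key b < key a} := by
    intro k
    induction k with
    | zero => simpa using hJ
    | succ k ih =>
      rw [pow_succ]
      refine Ideal.mul_le.2 fun r hr s hs => MI_mul_mem ?_ (ih hr) (hJ hs)
      intro a ha a' ha'
      simp only [Set.mem_ofPred_eq] at ha ha' ⊢
      rw [succ_nsmul, map_add]
      exact add_lt_add ha ha'
  have hfn : f ^ n ∈ MI y {a | n • key b < key a} := by
    rw [eq_neg_of_add_eq_zero_left he]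
    refine neg_mem (sum_mem fun i hi => ?_)
    have hi' := Finset.mem_Icc.1 hi
    obtain ⟨k, rfl⟩ : ∃ k, i = k + 1 := ⟨i - 1, by omega⟩
    refine MI_mul_mem ?_ (hJpow k (hc _ hi)) (hGpow (n - (k + 1)))
    intro a ha a' ha'
    simp only [Set.mem_ofPred_eq] at ha ha' ⊢
    rw [map_add]
    calc n • key b = (k + 1) • key b + (n - (k + 1)) • key b := by
          rw [← add_nsmul]; congr 1; omega
      _ < _ := add_lt_add_of_lt_of_le ha ha'
  have h1 : u ^ n * mono y (n • b) ∈ MI y {a | n • key b < key a} := by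
    simpa using sub_mem hfn (hdiff n)
  rw [Ideal.unit_mul_mem_iff_mem _ (hu.pow n)] at h1
  obtain ⟨a, ha, hab⟩ := hy _ _ h1
  have := hkey hab
  rw [map_nsmul] at this
  exact absurd this (not_le.2 ha)

end core

/-- The weight-then-lex order key. -/
def wkey (w : Fin p → ℝ) : (Fin p → ℕ) →+ (ℝ ×ₗ Lex (Fin p → ℕ)) where
  toFun a := toLex (∑ i, w i * (a i : ℝ), toLex a)
  map_zero' := by simp
  map_add' a b := by
    simp only [Pi.add_apply, Nat.cast_add, mul_add, Finset.sum_add_distrib]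
    rfl

lemma wkey_mono {w : Fin p → ℝ} (hw : ∀ i, 0 ≤ w i) : Monotone (wkey w) := by
  intro a b hab
  refine Prod.Lex.toLex_mono (Prod.mk_le_mk.2 ⟨?_, Pi.toLex_monotone hab⟩)
  exact Finset.sum_le_sum fun i _ => mul_le_mul_of_nonneg_left (by exact_mod_cast hab i) (hw i)

lemma wkey_inj (w : Fin p → ℝ) : Function.Injective (wkey w) := by
  intro a b h
  have := congrArg (fun z => ofLex (ofLex z).2) h
  exact this

lemma core {A : Type*} [CommRing A] {y : Fin p → A} (hy : HML y) (w : Fin p → ℝ)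
    (hw : ∀ i, 0 ≤ w i) (c : ℝ) (J : Ideal A) (hJ : J ≤ MI y {a | c ≤ ∑ i, w i * (a i : ℝ)})
    (f : A) (hf : f ∈ intClosure J) (B : Finset (Fin p → ℕ)) (hB : URep y f B) :
    ∀ b ∈ B, c ≤ ∑ i, w i * (b i : ℝ) := by
  classical
  by_contra! hcon
  obtain ⟨b, hb, hbc⟩ := hcon
  obtain ⟨b0, hb0, hmin⟩ := Finset.exists_min_image B (wkey w) ⟨b, hb⟩
  obtain ⟨u, hu, rfl⟩ := hB
  obtain ⟨n, hn, a, ha, he⟩ := hf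
  have hle : ∑ i, w i * (b0 i : ℝ) ≤ ∑ i, w i * (b i : ℝ) := by
    have := hmin b hb
    rcases Prod.Lex.le_iff.1 this with h | h
    · exact le_of_lt h
    · exact h.1.le
  refine core0 hy (wkey w) (wkey_mono hw) b0 (u b0) _ (hu _ hb0) J (hJ.trans (MI_mono ?_)) ?_
    n hn a ha he
  · intro d hd
    exact Prod.Lex.lt_iff.2 (Or.inl ((hle.trans_lt hbc).trans_le hd))
  · rw [← Finset.add_sum_erase _ _ hb0, add_sub_cancel_left]
    refine sum_mem fun d hd => Ideal.mul_mem_left _ _ (mono_mem_MI ?_)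
    rw [Finset.mem_erase] at hd
    exact lt_of_le_of_ne (hmin d hd.2) fun h => hd.1 (wkey_inj w h.symm)

lemma pow_le_MI {A : Type*} [CommRing A] (y : Fin p → A) (n : ℕ) :
    (Ideal.span (Set.range y)) ^ n ≤ MI y {a | ∑ i, a i = n} := by
  induction n with
  | zero =>
    have : mono y 0 ∈ MI y {a | ∑ i, a i = 0} := mono_mem_MI (by simp)
    rw [mono_zero] at this
    rw [(Ideal.eq_top_iff_one _).2 this]
    exact le_top
  | succ n ih =>
    rw [pow_succ]
    have hs : Ideal.span (Set.range y) ≤ MI y {a | ∑ i, a i = 1} := by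
      refine Ideal.span_le.2 ?_
      rintro _ ⟨i, rfl⟩
      rw [← mono_single y i]
      exact mono_mem_MI (by simp)
    refine Ideal.mul_le.2 fun r hr s hs' => MI_mul_mem ?_ (ih hr) (hs hs')
    intro a ha b hb
    simp only [Set.mem_ofPred_eq, Pi.add_apply, Finset.sum_add_distrib] at *
    omega

lemma mono_mem_pow {A : Type*} [CommRing A] (y : Fin p → A) (a : Fin p → ℕ) :
    mono y a ∈ (Ideal.span (Set.range y)) ^ (∑ i, a i) := by
  rw [← Finset.prod_pow_eq_pow_sum]
  exact Ideal.prod_mem_prod fun i _ =>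
    Ideal.pow_mem_pow (Ideal.subset_span (Set.mem_range_self i)) _

lemma krull {A : Type*} [CommRing A] [IsLocalRing A] [IsNoetherianRing A] (J : Ideal A) (f : A)
    (h : ∀ n, f ∈ J ⊔ IsLocalRing.maximalIdeal A ^ n) : f ∈ J := by
  have h0 := Ideal.iInf_pow_smul_eq_bot_of_isLocalRing (R := A) (M := A ⧸ J)
    (IsLocalRing.maximalIdeal A) (Ideal.IsPrime.ne_top')
  rw [← Ideal.Quotient.eq_zero_iff_mem, ← Submodule.mem_bot A, ← h0, Submodule.mem_iInf]
  intro n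
  obtain ⟨j, hj, m, hm, rfl⟩ := Submodule.mem_sup.1 (h n)
  rw [map_add, Ideal.Quotient.eq_zero_iff_mem.2 hj, zero_add]
  have : Ideal.Quotient.mk J m = m • (1 : A ⧸ J) := by
    rw [Algebra.smul_def, mul_one]
    rfl
  rw [this]
  exact Submodule.smul_mem_smul hm trivial

/-- Existence of unit representations. -/
lemma URep_exists {A : Type*} [CommRing A] [IsLocalRing A] [IsNoetherianRing A] {y : Fin p → A}
    (hy : HML y) (hm : Ideal.span (Set.range y) = IsLocalRing.maximalIdeal A) (f : A) :
    ∃ B, URep y f B ∧ AC B := by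
  classical
  set m := IsLocalRing.maximalIdeal A with hmdef
  let Good : Finset (Fin p → ℕ) → ((Fin p → ℕ) → A) → ℕ → Prop := fun B u n =>
    AC B ∧ (∀ b ∈ B, IsUnit (u b)) ∧ (∀ b ∈ B, ∑ i, b i < n) ∧
      f - ∑ b ∈ B, u b * mono y b ∈ m * MI y {b | b ∈ B} ⊔ m ^ n
  let 𝓜 : Set (Ideal A) := {M | ∃ B u n, Good B u n ∧ M = MI y {b | b ∈ B}}
  have hne : 𝓜.Nonempty := ⟨_, ∅, 0, 0, ⟨by simp [AC], by simp, by simp, by simp⟩, rfl⟩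
  obtain ⟨M, ⟨B, u, n0, hG, rfl⟩, hmax⟩ := set_has_maximal_iff_noetherian.2 ‹_› 𝓜 hne
  have hstep : ∀ n, n0 ≤ n → Good B u n := by
    intro n hn
    induction n, hn using Nat.le_induction with
    | base => exact hG
    | succ n hn ih =>
      obtain ⟨hAC, hu, hdeg, hmem⟩ := ih
      refine ⟨hAC, hu, fun b hb => (hdeg b hb).trans (Nat.lt_succ_self n), ?_⟩
      obtain ⟨j, hj, g, hg, hjg⟩ := Submodule.mem_sup.1 hmem
      have hg' := pow_le_MI y n (by rw [hm]; exact hg)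
      unfold MI at hg'
      rw [Finsupp.mem_span_image_iff_linearCombination] at hg'
      obtain ⟨c, hc, rfl⟩ := hg'
      rw [Finsupp.linearCombination_apply, Finsupp.sum] at hjg
      simp only [smul_eq_mul] at hjg
      have hcdeg : ∀ a ∈ c.support, ∑ i, a i = n := fun a ha => hc ha
      set C := c.support.filter (fun a => IsUnit (c a) ∧ ¬ ∃ b ∈ B, b ≤ a) with hC
      have hCmem : ∀ a, a ∈ C → ∑ i, a i = n ∧ IsUnit (c a) ∧ ¬ ∃ b ∈ B, b ≤ a := fun a ha =>
        ⟨hcdeg a (Finset.mem_filter.1 ha).1, (Finset.mem_filter.1 ha).2⟩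
      have hdisj : Disjoint B C := by
        rw [Finset.disjoint_left]
        intro a ha ha'
        exact (hCmem a ha').2.2 ⟨a, ha, le_rfl⟩
      have hrest : ∑ a ∈ c.support.filter (fun a => ¬ (IsUnit (c a) ∧ ¬ ∃ b ∈ B, b ≤ a)),
          c a * mono y a ∈ m * MI y {b | b ∈ B} ⊔ m ^ (n + 1) := by
        refine sum_mem fun a ha => ?_
        rw [Finset.mem_filter] at ha
        obtain ⟨ha, hna⟩ := ha
        by_cases hua : IsUnit (c a)
        · have : ∃ b ∈ B, b ≤ a := by
            by_contra h; exact hna ⟨hua, h⟩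
          obtain ⟨b, hb, hba⟩ := this
          refine Ideal.mem_sup_left (Ideal.mul_mem_left _ _ ?_)
          rw [← tsub_add_cancel_of_le hba, mono_add]
          refine Ideal.mul_mem_mul ?_ (mono_mem_MI hb)
          have h1 := mono_mem_pow y (a - b)
          rw [hm] at h1
          refine Ideal.pow_le_self ?_ h1
          intro h0
          have h2 : ∑ i, a i = ∑ i, (a - b) i + ∑ i, b i := by
            rw [← Finset.sum_add_distrib]
            exact Finset.sum_congr rfl fun i _ => (tsub_add_cancel_of_le (hba i)).symm
          have := hcdeg a ha
          have := hdeg b hb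
          omega
        · refine Ideal.mem_sup_right ?_
          rw [pow_succ']
          refine Ideal.mul_mem_mul ((IsLocalRing.mem_maximalIdeal _).2 hua) ?_
          have h1 := mono_mem_pow y a
          rwa [hm, hcdeg a ha] at h1
      have hj' : j ∈ m * MI y {b | b ∈ B} ⊔ m ^ (n + 1) := Ideal.mem_sup_left hj
      rw [← Finset.sum_filter_add_sum_filter_not c.support
        (fun a => IsUnit (c a) ∧ ¬ ∃ b ∈ B, b ≤ a), ← hC] at hjg
      have hCe : C = ∅ := by
        let u' : (Fin p → ℕ) → A := fun a => if a ∈ B then u a else c a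
        have hle : MI y {b | b ∈ B} ≤ MI y {b | b ∈ B ∪ C} :=
          MI_mono fun b hb => Finset.mem_union_left _ hb
        have hsum : ∑ b ∈ B ∪ C, u' b * mono y b =
            ∑ b ∈ B, u b * mono y b + ∑ b ∈ C, c b * mono y b := by
          rw [Finset.sum_union hdisj]
          congr 1
          · exact Finset.sum_congr rfl fun b hb => by simp [u', hb]
          · exact Finset.sum_congr rfl fun b hb => by
              simp [u', Finset.disjoint_right.1 hdisj hb]
        have hgood : Good (B ∪ C) u' (n + 1) := by
          refine ⟨?_, ?_, ?_, ?_⟩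
          · intro a ha b hb hab
            have hs : ∑ i, a i ≤ ∑ i, b i := Finset.sum_le_sum fun i _ => hab i
            rcases Finset.mem_union.1 ha with ha | ha <;> rcases Finset.mem_union.1 hb with hb | hb
            · exact hAC a ha b hb hab
            · exact absurd ⟨a, ha, hab⟩ (hCmem b hb).2.2
            · have := hdeg b hb
              have := (hCmem a ha).1
              omega
            · have h1 := (hCmem a ha).1
              have h2 := (hCmem b hb).1
              have h3 := (Finset.sum_eq_sum_iff_of_le (fun i _ => hab i)).1 (h1.trans h2.symm)
              exact funext fun i => h3 i (Finset.mem_univ i)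
          · intro b hb
            by_cases hbB : b ∈ B
            · simp [u', hbB, hu b hbB]
            · simpa [u', hbB] using (hCmem b ((Finset.mem_union.1 hb).resolve_left hbB)).2.1
          · intro b hb
            rcases Finset.mem_union.1 hb with hb | hb
            · exact (hdeg b hb).trans (Nat.lt_succ_self n)
            · rw [(hCmem b hb).1]; exact Nat.lt_succ_self n
          · rw [hsum, ← sub_sub, ← hjg]
            have := sup_le_sup_right (Ideal.mul_mono_right (I := m) hle) (m ^ (n + 1))
              (add_mem hj' hrest)
            convert this using 1
            ring
        have h1 := hmax _ ⟨B ∪ C, u', n + 1, hgood, rfl⟩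
        have h2 : MI y {b | b ∈ B ∪ C} ≤ MI y {b | b ∈ B} := by
          by_contra h
          exact h1 (lt_of_le_not_ge hle h)
        rw [Finset.eq_empty_iff_forall_notMem]
        intro a ha
        obtain ⟨b, hb, hba⟩ := hy _ a (h2 (mono_mem_MI (Finset.mem_union_right _ ha)))
        exact (hCmem a ha).2.2 ⟨b, hb, hba⟩
      rw [hCe, Finset.sum_empty, zero_add] at hjg
      rw [← hjg]
      exact add_mem hj' hrest
  have hk : f - ∑ b ∈ B, u b * mono y b ∈ m * MI y {b | b ∈ B} := by
    refine krull _ _ fun n => ?_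
    have h1 := (hstep (max n n0) (le_max_right _ _)).2.2.2
    have h2 : m ^ (max n n0) ≤ m ^ n := Ideal.pow_le_pow_right (le_max_left _ _)
    exact (sup_le_sup le_rfl h2 : m * MI y {b | b ∈ B} ⊔ m ^ (max n n0) ≤ _) h1
  unfold MI at hk
  rw [← smul_eq_mul, Submodule.mem_ideal_smul_span_iff_exists_sum'] at hk
  obtain ⟨d, hd, hde⟩ := hk
  refine ⟨B, ⟨fun b => u b + (if h : b ∈ B then d ⟨b, h⟩ else 0), ?_, ?_⟩, hG.1⟩
  · intro b hb
    simp only [hb, dif_pos]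
    by_contra h
    have h1 : u b + d ⟨b, hb⟩ ∈ m := (IsLocalRing.mem_maximalIdeal _).2 h
    have h2 : u b ∈ m := (Ideal.add_mem_iff_left _ (hd ⟨b, hb⟩)).1 h1
    exact (IsLocalRing.mem_maximalIdeal _).1 h2 (hG.2.1 b hb)
  · have : ∑ b ∈ B, (if h : b ∈ B then d ⟨b, h⟩ else 0) * mono y b =
        f - ∑ b ∈ B, u b * mono y b := by
      rw [← hde, Finsupp.sum_fintype _ _ (by simp)]
      rw [← Finset.sum_coe_sort B]
      exact Finset.sum_congr rfl fun b _ => by simp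
    simp only [add_mul, Finset.sum_add_distrib, this]
    ring

lemma map_mono {A : Type*} [CommRing A] (φ : R →+* A) (x : Fin p → R) (a : Fin p → ℕ) :
    φ (mono x a) = mono (fun i => φ (x i)) a := by
  simp [mono]

lemma map_MI {A : Type*} [CommRing A] (φ : R →+* A) (x : Fin p → R) (S : Set (Fin p → ℕ)) :
    (MI x S).map φ = MI (fun i => φ (x i)) S := by
  unfold MI
  rw [Ideal.map_span, ← Set.image_comp]
  congr 1
  refine Set.image_congr fun a _ => ?_
  simp [map_mono]

lemma loc_HML (x : Fin p → R) (hx : IsGRSOP x)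
    (P : Ideal R) [hP : P.IsPrime] (hPx : P = Ideal.span (Set.range x))
    (A : Type*) [CommRing A] [Algebra R A] [IsLocalization.AtPrime A P] : HML (fun i => algebraMap R A (x i)) := by
  intro S d h
  rw [← map_mono, ← map_MI, IsLocalization.algebraMap_mem_map_algebraMap_iff P.primeCompl] at h
  obtain ⟨r, hr, h⟩ := h
  exact ML x (GRSOP_prime hx) (GRSOP_not hx) S d r (by rw [← hPx]; exact hr) h

lemma loc_rep (x : Fin p → R)
    (P : Ideal R) [hP : P.IsPrime] (hPx : P = Ideal.span (Set.range x))
    (A : Type*) [CommRing A] [Algebra R A] [IsLocalization.AtPrime A P] (f : R) (B : Finset (Fin p → ℕ)) :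
    IsMonRep x f B ↔ URep (fun i => algebraMap R A (x i)) (algebraMap R A f) B := by
  constructor
  · rintro ⟨h, r, hh, hr, he⟩
    rw [← hPx] at hh
    have hu : IsUnit (algebraMap R A h) := IsLocalization.map_units A (⟨h, hh⟩ : P.primeCompl)
    obtain ⟨v, hv⟩ := hu
    refine ⟨fun a => (v⁻¹ : Aˣ) * algebraMap R A (r a), ?_, ?_⟩
    · intro a ha
      have := hr a ha
      rw [← hPx] at this
      exact (v⁻¹).isUnit.mul (IsLocalization.map_units A (⟨r a, this⟩ : P.primeCompl))
    · have h1 := congrArg (algebraMap R A) he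
      rw [map_mul, ← hv, map_sum] at h1
      have h2 : algebraMap R A f = (v⁻¹ : Aˣ) * ((v : A) * algebraMap R A f) := by simp
      rw [h2, h1, Finset.mul_sum]
      exact Finset.sum_congr rfl fun a _ => by rw [map_mul, map_mono, mul_assoc]
  · rintro ⟨u, hu, he⟩
    obtain ⟨h, hh⟩ := IsLocalization.exist_integer_multiples P.primeCompl B u
    have hh' : ∀ a, ∃ r : R, a ∈ B → algebraMap R A r = algebraMap R A h * u a := by
      intro a
      by_cases ha : a ∈ B
      · obtain ⟨r, hr⟩ := hh a ha
        exact ⟨r, fun _ => by rw [hr, Algebra.smul_def]⟩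
      · exact ⟨0, fun h => absurd h ha⟩
    choose r hr using hh'
    have h1 : algebraMap R A (h * f) = algebraMap R A (∑ a ∈ B, r a * mono x a) := by
      rw [map_mul, he, map_sum, Finset.mul_sum]
      refine Finset.sum_congr rfl fun a ha => ?_
      rw [map_mul, map_mono, hr a ha, mul_assoc]
    obtain ⟨c, hc⟩ := (IsLocalization.eq_iff_exists P.primeCompl A).1 h1
    refine ⟨c * h, fun a => c * r a, ?_, ?_, ?_⟩
    · rw [← hPx]
      exact (c * h).2
    · intro a ha
      rw [← hPx]
      have hra : r a ∉ P := by
        intro hmem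
        have h2 : IsUnit (algebraMap R A (r a)) := by
          rw [hr a ha]
          exact (IsLocalization.map_units A h).mul (hu a ha)
        exact (IsLocalization.AtPrime.isUnit_to_map_iff A P (r a)).1 h2 hmem
      exact P.primeCompl.mul_mem c.2 hra
    · rw [mul_assoc, hc, Finset.mul_sum]
      exact Finset.sum_congr rfl fun a _ => by rw [mul_assoc]

lemma mono_dvd_iff (x : Fin p → R) (hx : IsGRSOP x) (a b : Fin p → ℕ) : mono x a ∣ mono x b ↔ a ≤ b := by
  refine ⟨fun h => ?_, mono_dvd⟩
  have h1 : (1 : R) ∉ Ideal.span (Set.range x) := by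
    have := (GRSOP_prime hx Set.univ).ne_top
    rw [Set.image_univ] at this
    exact fun h => this ((Ideal.eq_top_iff_one _).2 h)
  obtain ⟨c, rfl, hc⟩ := ML x (GRSOP_prime hx) (GRSOP_not hx) {a} b 1 h1
    (by rw [one_mul]; exact Ideal.mem_of_dvd _ h (mono_mem_MI rfl))
  exact hc

lemma loc_minrep (x : Fin p → R) (hx : IsGRSOP x)
    (P : Ideal R) [hP : P.IsPrime] (hPx : P = Ideal.span (Set.range x))
    (A : Type*) [CommRing A] [Algebra R A] [IsLocalization.AtPrime A P] (f : R) (B : Finset (Fin p → ℕ)) :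
    IsMinMonRep x f B ↔ URep (fun i => algebraMap R A (x i)) (algebraMap R A f) B ∧ AC B := by
  unfold IsMinMonRep
  rw [loc_rep x P hPx A]
  refine and_congr_right fun _ => ?_
  simp only [mono_dvd_iff x hx, AC]
  refine forall₂_congr fun a ha => forall₂_congr fun b hb => ?_
  tauto

lemma supp_eq (x : Fin p → R) (hx : IsGRSOP x)
    (P : Ideal R) [hP : P.IsPrime] (hPx : P = Ideal.span (Set.range x))
    (A : Type*) [CommRing A] [Algebra R A] [IsLocalization.AtPrime A P] (f : R) (B : Finset (Fin p → ℕ))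
    (hB : URep (fun i => algebraMap R A (x i)) (algebraMap R A f) B ∧ AC B) :
    supp x f = B := by
  have h : ∃ B, IsMinMonRep x f B := ⟨B, (loc_minrep x hx P hPx A f B).2 hB⟩
  unfold supp
  rw [dif_pos h]
  have h2 := (loc_minrep x hx P hPx A f _).1 h.choose_spec
  rw [URep_unique (loc_HML x hx P hPx A) h2.1 h2.2 hB.1 hB.2]

lemma supp_spec (x : Fin p → R) (hx : IsGRSOP x)
    (P : Ideal R) [hP : P.IsPrime] (hPx : P = Ideal.span (Set.range x))
    (A : Type*) [CommRing A] [Algebra R A] [IsLocalization.AtPrime A P] [IsLocalRing A] [IsNoetherianRing A] (f : R) :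
    ∃ B : Finset (Fin p → ℕ), supp x f = B ∧
      URep (fun i => algebraMap R A (x i)) (algebraMap R A f) B ∧ AC B := by
  have hm : Ideal.span (Set.range (fun i => algebraMap R A (x i))) =
      IsLocalRing.maximalIdeal A := by
    rw [← IsLocalization.AtPrime.map_eq_maximalIdeal P A, hPx, Ideal.map_span, ← Set.range_comp]
    rfl
  obtain ⟨B, hB⟩ := URep_exists (loc_HML x hx P hPx A) hm (algebraMap R A f)
  exact ⟨B, supp_eq x hx P hPx A f B hB, hB⟩

lemma supp_mono (x : Fin p → R) (hx : IsGRSOP x)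
    (P : Ideal R) [hP : P.IsPrime] (hPx : P = Ideal.span (Set.range x)) (a : Fin p → ℕ) : supp x (mono x a) = {a} := by
  rw [supp_eq x hx P hPx (Localization.AtPrime P) (mono x a) {a} ⟨⟨1, by simp, by simp [map_mono]⟩, by simp [AC]⟩]
  simp

lemma supp_upset (x : Fin p → R) (hx : IsGRSOP x)
    (P : Ideal R) [hP : P.IsPrime] (hPx : P = Ideal.span (Set.range x))
    (A : Type*) [CommRing A] [Algebra R A] [IsLocalization.AtPrime A P] [IsLocalRing A] [IsNoetherianRing A] (I : Ideal R) (a c : Fin p → ℕ)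
    (h : a ∈ ⋃ f ∈ (I : Set R), supp x f) : a + c ∈ ⋃ f ∈ (I : Set R), supp x f := by
  simp only [Set.mem_iUnion] at h ⊢
  obtain ⟨f, hf, ha⟩ := h
  refine ⟨mono x c * f, Ideal.mul_mem_left _ _ hf, ?_⟩
  obtain ⟨B, hB, ⟨u, hu, hr⟩, hAC⟩ := supp_spec x hx P hPx A f
  rw [hB] at ha
  rw [supp_eq x hx P hPx A (mono x c * f) (B.map (addRightEmbedding c)) ⟨?_, ?_⟩]
  · simpa using ha
  · refine ⟨fun b => u (b - c), ?_, ?_⟩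
    · intro b hb
      obtain ⟨b', hb', rfl⟩ := Finset.mem_map.1 hb
      simpa using hu b' hb'
    · rw [map_mul, hr, Finset.sum_map, Finset.mul_sum]
      refine Finset.sum_congr rfl fun b _ => ?_
      simp only [addRightEmbedding_apply, add_tsub_cancel_right, mono_add, map_mono]
      ring
  · intro b hb d hd hbd
    obtain ⟨b', hb', rfl⟩ := Finset.mem_map.1 hb
    obtain ⟨d', hd', rfl⟩ := Finset.mem_map.1 hd
    simp only [addRightEmbedding_apply, add_le_add_iff_right] at hbd ⊢
    rw [hAC b' hb' d' hd' hbd]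


lemma toR_add (a b : Fin p → ℕ) : toR (a + b) = toR a + toR b := by
  ext i; simp [toR]

lemma orthant_subset : {v : Fin p → ℝ | ∀ i, 0 ≤ v i} ⊆ convexHull ℝ (Set.range (toR (p := p))) := by
  have h : Set.range (toR (p := p)) = Set.pi Set.univ (fun _ => Set.range (fun n : ℕ => (n : ℝ))) := by
    ext v
    simp only [Set.mem_range, Set.mem_univ_pi]
    constructor
    · rintro ⟨a, rfl⟩ i
      exact ⟨a i, rfl⟩
    · intro h
      choose a ha using h
      exact ⟨a, funext ha⟩
  rw [h, convexHull_pi]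
  intro v hv i _
  obtain ⟨n, hn⟩ := exists_nat_ge (v i)
  have h1 : v i ∈ segment ℝ (((0 : ℕ) : ℝ)) (n : ℝ) := by
    rw [segment_eq_Icc (by simp)]
    exact ⟨by simpa using hv i, hn⟩
  exact segment_subset_convexHull (Set.mem_range_self 0) (Set.mem_range_self n) h1

lemma hull_closed (S : Set (Fin p → ℕ)) (hS : ∀ a ∈ S, ∀ c, a + c ∈ S) :
    (∀ u ∈ convexHull ℝ (toR '' S), ∀ v : Fin p → ℝ, (∀ i, 0 ≤ v i) →
      u + v ∈ convexHull ℝ (toR '' S)) ∧ IsClosed (convexHull ℝ (toR '' S)) := by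
  have hup : ∀ u ∈ convexHull ℝ (toR '' S), ∀ v : Fin p → ℝ, (∀ i, 0 ≤ v i) →
      u + v ∈ convexHull ℝ (toR '' S) := by
    intro u hu v hv
    have h1 : u + v ∈ convexHull ℝ (toR '' S + Set.range (toR (p := p))) := by
      rw [convexHull_add]
      exact Set.add_mem_add hu (orthant_subset hv)
    refine convexHull_mono ?_ h1
    rintro _ ⟨_, ⟨a, ha, rfl⟩, _, ⟨c, rfl⟩, rfl⟩
    exact ⟨a + c, hS a ha c, toR_add a c⟩
  refine ⟨hup, ?_⟩
  set F : Set (Fin p → ℕ) := {a | Minimal (· ∈ S) a} with hF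
  have hFfin : F.Finite := WellQuasiOrderedLE.finite_of_isAntichain (setOfPred_minimal_antichain _)
  set O : Set (Fin p → ℝ) := {v | ∀ i, 0 ≤ v i} with hO
  have hOc : IsClosed O := by
    have : O = Set.Ici 0 := by ext v; simp [hO, Pi.le_def]
    rw [this]; exact isClosed_Ici
  have hOv : Convex ℝ O := by
    have : O = Set.Ici 0 := by ext v; simp [hO, Pi.le_def]
    rw [this]; exact convex_Ici _
  have heq : convexHull ℝ (toR '' S) = convexHull ℝ (toR '' F) + O := by
    apply Set.Subset.antisymm
    · refine convexHull_min ?_ ((convex_convexHull _ _).add hOv)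
      rintro _ ⟨a, ha, rfl⟩
      obtain ⟨b, hba, hb⟩ := exists_minimal_le_of_wellFoundedLT (· ∈ S) a ha
      refine ⟨toR b, subset_convexHull _ _ ⟨b, hb, rfl⟩, toR (a - b), fun i => by simp [toR], ?_⟩
      simp only [← toR_add, add_tsub_cancel_of_le hba]
    · rintro _ ⟨u, hu, v, hv, rfl⟩
      exact hup u (convexHull_mono (Set.image_mono fun a ha => ha.prop) hu) v hv
  rw [heq]
  exact hOc.add_left_of_isCompact ((hFfin.image _).isCompact_convexHull ℝ)

lemma separate (S : Set (Fin p → ℕ)) (hS : ∀ a ∈ S, ∀ c, a + c ∈ S) (b : Fin p → ℕ)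
    (hb : toR b ∉ convexHull ℝ (toR '' S)) :
    ∃ (w : Fin p → ℝ) (c : ℝ), (∀ i, 0 ≤ w i) ∧ ∑ i, w i * (b i : ℝ) < c ∧
      ∀ a : Fin p → ℕ, toR a ∈ convexHull ℝ (toR '' S) → c ≤ ∑ i, w i * (a i : ℝ) := by
  rcases S.eq_empty_or_nonempty with rfl | ⟨s, hs⟩
  · exact ⟨0, 1, by simp, by simp, by simp⟩
  obtain ⟨hup, hcl⟩ := hull_closed S hS
  obtain ⟨g, c, hg1, hg2⟩ := geometric_hahn_banach_point_closed (convex_convexHull ℝ _) hcl hb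
  have hg : ∀ a : Fin p → ℕ, g (toR a) = ∑ i, g (Pi.single i 1) * (a i : ℝ) := by
    intro a
    conv_lhs => rw [pi_eq_sum_univ' (toR a)]
    rw [map_sum]
    refine Finset.sum_congr rfl fun i _ => ?_
    rw [map_smul, smul_eq_mul, mul_comm]
    congr 2
  refine ⟨fun i => g (Pi.single i 1), c, ?_, ?_, ?_⟩
  · intro i
    by_contra! hneg
    have hs' : toR s ∈ convexHull ℝ (toR '' S) := subset_convexHull _ _ ⟨s, hs, rfl⟩
    have h1 := hg2 _ hs'
    set t : ℝ := (c - g (toR s)) / g (Pi.single i 1) with ht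
    have ht0 : 0 ≤ t := div_nonneg_of_nonpos (by linarith) hneg.le
    have h2 := hg2 _ (hup _ hs' (t • Pi.single i 1) (fun j => by
      by_cases hj : j = i
      · subst hj; simpa using ht0
      · simp [hj]))
    rw [map_add, map_smul, smul_eq_mul, ht, div_mul_cancel₀ _ hneg.ne] at h2
    linarith
  · rw [← hg]; exact hg1
  · intro a ha
    rw [← hg]
    exact (hg2 _ ha).le

lemma subset_intClosure {A : Type*} [CommRing A] (J : Ideal A) {f : A} (hf : f ∈ J) :
    f ∈ intClosure J := by
  refine ⟨1, one_pos, fun _ => -f, ?_, by simp⟩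
  intro i hi
  have : i = 1 := by simpa using hi
  subst this
  simpa using hf

lemma map_intClosure {A : Type*} [CommRing A] (φ : R →+* A) (I : Ideal R) {f : R}
    (hf : f ∈ intClosure I) : φ f ∈ intClosure (I.map φ) := by
  obtain ⟨n, hn, a, ha, he⟩ := hf
  refine ⟨n, hn, fun i => φ (a i), ?_, ?_⟩
  · intro i hi
    rw [← Ideal.map_pow]
    exact Ideal.mem_map_of_mem _ (ha i hi)
  · simpa using congrArg φ he

/-- `Γ_x(I) = Γ_x(I̅) = Γ_x(I₀)`. -/
theorem newtonPolyhedron_eq_intClosure_eq_idealZero {R : Type*} [CommRing R] {p : ℕ}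
    (x : Fin p → R) (hR : IsRegularDomain R) (hx : IsGRSOP x) (I : Ideal R) :
    ΓI x I = Γ x (intClosure I) ∧ ΓI x I = ΓI x (idealZero x I) := by
  classical
  have hprime : (Ideal.span (Set.range x)).IsPrime := by
    have := GRSOP_prime hx Set.univ
    rwa [Set.image_univ] at this
  set P : Ideal R := Ideal.span (Set.range x) with hPx
  let A := Localization.AtPrime P
  have hnoeth : IsNoetherianRing A := (hR.2 P hprime).1
  have hS : ∀ a ∈ ⋃ f ∈ (I : Set R), supp x f, ∀ c, a + c ∈ ⋃ f ∈ (I : Set R), supp x f :=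
    fun a ha c => supp_upset x hx P hPx A I a c ha
  -- the main inclusion, for an ideal `J` all of whose weights are bounded by those of `I`
  have main : ∀ J : Ideal R, (∀ (w : Fin p → ℝ) (c : ℝ),
      (∀ a : Fin p → ℕ, toR a ∈ ΓI x I → c ≤ ∑ i, w i * (a i : ℝ)) →
        J.map (algebraMap R A) ≤ MI (fun i => algebraMap R A (x i))
          {a | c ≤ ∑ i, w i * (a i : ℝ)}) →
      Γ x (intClosure J) ⊆ ΓI x I := by
    intro J hJ
    refine convexHull_min ?_ (convex_convexHull _ _)
    rintro _ ⟨b, hb, rfl⟩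
    simp only [Set.mem_iUnion] at hb
    obtain ⟨f, hf, hb⟩ := hb
    by_contra hcon
    obtain ⟨w, c, hw, hbc, hc⟩ := separate _ hS b hcon
    obtain ⟨B, hB, hrep, -⟩ := supp_spec x hx P hPx A f
    rw [hB] at hb
    have := core (loc_HML x hx P hPx A) w hw c _ (hJ w c hc) _ (map_intClosure _ J hf) B hrep b hb
    linarith
  have hmono : ∀ s t : Set R, s ⊆ t → Γ x s ⊆ Γ x t := fun s t hst =>
    convexHull_mono (Set.image_mono (Set.biUnion_subset_biUnion_left hst))
  refine ⟨Set.Subset.antisymm (hmono _ _ fun f hf => subset_intClosure I hf) (main I ?_),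
    Set.Subset.antisymm ?_ ((hmono _ _ fun f hf => subset_intClosure _ hf).trans
      (main (idealZero x I) ?_))⟩
  · intro w c hc
    rw [Ideal.map_le_iff_le_comap]
    intro f hf
    obtain ⟨B, hB, hrep, -⟩ := supp_spec x hx P hPx A f
    refine URep_mem_MI hrep fun b hb => hc b (subset_convexHull _ _ ⟨b, ?_, rfl⟩)
    simp only [Set.mem_iUnion]
    exact ⟨f, hf, by rw [hB]; exact hb⟩
  · refine convexHull_min ?_ (convex_convexHull _ _)
    rintro _ ⟨a, ha, rfl⟩
    refine subset_convexHull _ _ ⟨a, ?_, rfl⟩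
    simp only [Set.mem_iUnion]
    refine ⟨mono x a, Ideal.subset_span ⟨a, subset_convexHull _ _ ⟨a, ha, rfl⟩, rfl⟩, ?_⟩
    rw [supp_mono x hx P hPx]
    rfl
  · intro w c hc
    have : idealZero x I = MI x {a | toR a ∈ ΓI x I} := rfl
    rw [this, map_MI]
    exact MI_mono hc

end NND
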